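/- C2 ≤ GNN_b^AC+: for every C2 classifier φ(x) of dimension d there exists a GNN classifier N_φ in GNN_b^AC+ of dimension d such that for every pointed graph (G,v) of dimension d, N_φ(G,v) = true if and only if M_G ⊨ φ(v). -/

import Mathlib

/-!
The network runs bounded colour refinement: with `c = φ.rank + 1`, every layer stores at a node an
injective real encoding of its previous label, the multiset of its neighbours' labels capped at
`c`, and the multiset of its non-neighbours' labels capped at `c`. Such encodings exist because all
the sets involved have at most continuum cardinality, and capping makes both aggregations
`c`-bounded.

The crucial fact is `sat_iff_of_labelAt_eq`: if two assignments (possibly into different graphs)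
give the two variables equal labels at level `ℓ` and agree on equality and adjacency of the two
variables, then they satisfy the same formulas of quantifier depth at most `ℓ` and rank less
than `c`. For a counting quantifier over one variable, the candidate values split into the node
carrying the other variable, its neighbours and its non-neighbours. Inside each part satisfaction
depends only on the label one level below, and the number of witnesses up to `c` can be read off
the capped multiset (`le_card_filter_iff_of_capAt_eq`).

Hence, after `φ.depth` layers, truth of `φ` is a function of the label of the node, and the
classification function can be taken to be that function.
-/


attribute [local instance] Classical.propDecidable

noncomputable section

/-! ## Multisets with capped multiplicities, and bounded aggregation functions -/

/-- The multiset obtained from `M` by replacing every multiplicity greater than `k` by `k`. -/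
def Multiset.capAt {α : Type*} (k : ℕ) (M : Multiset α) : Multiset α :=
  haveI := Classical.decEq α
  M.toFinset.val.bind fun a => Multiset.replicate (min (M.count a) k) a

/-- A function on multisets is `k`-bounded if its value on any multiset agrees with its value
on the multiset with all multiplicities capped at `k`. -/
def KBounded {α β : Type*} (k : ℕ) (f : Multiset α → β) : Prop :=
  ∀ M : Multiset α, f M = f (M.capAt k)

/-- A function on multisets is bounded if it is `k`-bounded for some `k`;
it is set-based if it is `1`-bounded. -/
def BoundedAgg {α β : Type*} (f : Multiset α → β) : Prop :=
  ∃ k : ℕ, KBounded k f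

/-! ## Finite undirected simple node-labelled graphs -/

structure LGraph (d : ℕ) where
  n : ℕ
  adj : Fin n → Fin n → Prop
  symm : ∀ u v, adj u v → adj v u
  irrefl : ∀ v, ¬ adj v v
  label : Fin n → Fin d → Bool

/-- The neighbours of a node. -/
def LGraph.nbrs {d : ℕ} (G : LGraph d) (v : Fin G.n) : Finset (Fin G.n) :=
  Finset.univ.filter fun w => G.adj v w

/-- The non-neighbours of a node (excluding the node itself). -/
def LGraph.conbrs {d : ℕ} (G : LGraph d) (v : Fin G.n) : Finset (Fin G.n) :=
  Finset.univ.filter fun w => ¬ G.adj v w ∧ w ≠ v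

/-! ## GNN classifiers -/

/-- The kind of the layers of a GNN: aggregate-combine (`AC`),
aggregate-combine-readout (`ACR`), or extended aggregate-combine (`ACP`, i.e. `AC+`). -/
inductive GNNKind : Type
  | AC | ACR | ACP

/-- A GNN layer from dimension `din` to dimension `dout`: an aggregation function `agg`
(over neighbours), an auxiliary aggregation/readout function `aux` (fed the empty multiset in
`AC` layers, the multiset of all node labels in `ACR` layers, and the multiset of labels of
non-neighbours in `AC+` layers), and a combination function `comb`. -/
structure GNNLayer (din dout : ℕ) where
  m₁ : ℕ
  m₂ : ℕ
  agg : Multiset (Fin din → ℝ) → Fin m₁ → ℝ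
  aux : Multiset (Fin din → ℝ) → Fin m₂ → ℝ
  comb : (Fin din → ℝ) → (Fin m₁ → ℝ) → (Fin m₂ → ℝ) → Fin dout → ℝ

/-- A GNN classifier of dimension `d` with `L` layers of matching dimensions and a
classification function `cls`. -/
structure GNN (d : ℕ) where
  kind : GNNKind
  L : ℕ
  dims : ℕ → ℕ
  dims_zero : dims 0 = d
  layer : (ℓ : ℕ) → ℓ < L → GNNLayer (dims ℓ) (dims (ℓ + 1))
  cls : (Fin (dims L) → ℝ) → Bool

/-- The set of nodes whose labels are fed to the second aggregation function `aux`. -/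
def GNN.auxSet {d : ℕ} (N : GNN d) (G : LGraph d) (v : Fin G.n) : Finset (Fin G.n) :=
  match N.kind with
  | GNNKind.AC => ∅
  | GNNKind.ACR => Finset.univ
  | GNNKind.ACP => G.conbrs v

/-- The labelling of the nodes of `G` after `ℓ` layers of `N` have been applied. -/
def GNN.labelAt {d : ℕ} (N : GNN d) (G : LGraph d) : (ℓ : ℕ) → Fin G.n → Fin (N.dims ℓ) → ℝ
  | 0 => fun v i => if G.label v (Fin.cast N.dims_zero i) = true then 1 else 0
  | ℓ + 1 => fun v =>
      if h : ℓ < N.L then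
        (N.layer ℓ h).comb (N.labelAt G ℓ v)
          ((N.layer ℓ h).agg ((G.nbrs v).val.map fun w => N.labelAt G ℓ w))
          ((N.layer ℓ h).aux ((N.auxSet G v).val.map fun w => N.labelAt G ℓ w))
      else fun _ => 0

/-- The output of the GNN classifier `N` on the pointed graph `(G, v)`. -/
def GNN.eval {d : ℕ} (N : GNN d) (G : LGraph d) (v : Fin G.n) : Bool :=
  N.cls (N.labelAt G N.L v)

/-- The spectrum of `N` at layer `ℓ`: by convention, at layer `0` it is the set of Boolean
vectors of the dimension of `N`; at layer `ℓ + 1` it is the set of vectors that can occur as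
node labels upon application of layer `ℓ + 1` in applications of `N` to graphs. -/
def GNN.spec {d : ℕ} (N : GNN d) : (ℓ : ℕ) → Set (Fin (N.dims ℓ) → ℝ)
  | 0 => {x | ∀ i, x i = 0 ∨ x i = 1}
  | ℓ + 1 => {x | ∃ (G : LGraph d) (v : Fin G.n), N.labelAt G (ℓ + 1) v = x}

/-! ## Modal formulas (GMLC and its fragments GML, ML(E), ML) -/

inductive MForm (d : ℕ) : Type
  | prop : Fin d → MForm d
  | neg : MForm d → MForm d
  | and : MForm d → MForm d → MForm d
  | dia : ℕ → MForm d → MForm d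
  | glob : ℕ → MForm d → MForm d

namespace MForm

/-- Modal depth. -/
def depth {d : ℕ} : MForm d → ℕ
  | prop _ => 0
  | neg φ => depth φ
  | and φ ψ => max (depth φ) (depth ψ)
  | dia _ φ => depth φ + 1
  | glob _ φ => depth φ + 1

/-- Counting rank. -/
def rank {d : ℕ} : MForm d → ℕ
  | prop _ => 0
  | neg φ => rank φ
  | and φ ψ => max (rank φ) (rank ψ)
  | dia k φ => max k (rank φ)
  | glob k φ => max k (rank φ)

/-- Graded modal logic: no global modalities, grades are positive. -/
def IsGML {d : ℕ} : MForm d → Prop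
  | prop _ => True
  | neg φ => IsGML φ
  | and φ ψ => IsGML φ ∧ IsGML ψ
  | dia k φ => 1 ≤ k ∧ IsGML φ
  | glob _ _ => False

/-- Basic modal logic: no global modalities, all graded modalities are `◇₁`. -/
def IsML {d : ℕ} : MForm d → Prop
  | prop _ => True
  | neg φ => IsML φ
  | and φ ψ => IsML φ ∧ IsML ψ
  | dia k φ => k = 1 ∧ IsML φ
  | glob _ _ => False

/-- Graded modal logic with counting: grades are positive. -/
def IsGMLC {d : ℕ} : MForm d → Prop
  | prop _ => True
  | neg φ => IsGMLC φ
  | and φ ψ => IsGMLC φ ∧ IsGMLC ψ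
  | dia k φ => 1 ≤ k ∧ IsGMLC φ
  | glob k φ => 1 ≤ k ∧ IsGMLC φ

/-- Modal logic with the global modality: all modalities are `◇₁` or `∃₁`. -/
def IsMLE {d : ℕ} : MForm d → Prop
  | prop _ => True
  | neg φ => IsMLE φ
  | and φ ψ => IsMLE φ ∧ IsMLE ψ
  | dia k φ => k = 1 ∧ IsMLE φ
  | glob k φ => k = 1 ∧ IsMLE φ

/-- A tautology (needs a proposition to exist). -/
def top {d : ℕ} (hd : 0 < d) : MForm d :=
  neg (and (prop ⟨0, hd⟩) (neg (prop ⟨0, hd⟩)))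

/-- Conjunction of a list of formulas (the empty conjunction is a tautology). -/
def conjList {d : ℕ} (hd : 0 < d) : List (MForm d) → MForm d
  | [] => top hd
  | [φ] => φ
  | φ :: ψ :: rest => and φ (conjList hd (ψ :: rest))

end MForm

/-! ## Finite pointed Kripke models -/

structure KModel (d : ℕ) where
  W : Type
  fintype : Fintype W
  R : W → W → Prop
  symm : ∀ u v, R u v → R v u
  irrefl : ∀ v, ¬ R v v
  val : W → Fin d → Prop

/-- Satisfaction of modal formulas. -/
def KModel.sat {d : ℕ} (M : KModel d) : M.W → MForm d → Prop
  | v, MForm.prop p => M.val v p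
  | v, MForm.neg φ => ¬ M.sat v φ
  | v, MForm.and φ ψ => M.sat v φ ∧ M.sat v ψ
  | v, MForm.dia k φ => k ≤ Nat.card {w : M.W // M.R v w ∧ M.sat w φ}
  | v, MForm.glob k φ => k ≤ Nat.card {w : M.W // M.sat w φ}

/-- A list enumerating the worlds of a finite Kripke model. -/
def KModel.worldList {d : ℕ} (M : KModel d) : List M.W :=
  haveI := M.fintype
  Finset.univ.toList

/-- The Kripke model associated with a node-labelled graph. -/
def LGraph.toKModel {d : ℕ} (G : LGraph d) : KModel d where
  W := Fin G.n
  fintype := inferInstance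
  R := G.adj
  symm := G.symm
  irrefl := G.irrefl
  val := fun v p => G.label v p = true

/-! ## Graded bisimulation games -/

/-- `GBisim c ℓ M v M' v'` holds iff Duplicator has a winning strategy in the `ℓ`-round
`c`-graded bisimulation game starting from configuration `(M, v, M', v')`. -/
def GBisim {d : ℕ} (c : ℕ) : (ℓ : ℕ) → (M : KModel d) → M.W → (M' : KModel d) → M'.W → Prop
  | 0, M, v, M', v' => ∀ p, M.val v p ↔ M'.val v' p
  | ℓ + 1, M, v, M', v' =>
      (∀ p, M.val v p ↔ M'.val v' p) ∧
      (∀ U₁ : Finset M.W, U₁.Nonempty → U₁.card ≤ c → (∀ u ∈ U₁, M.R v u) →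
        ∃ U₂ : Finset M'.W, U₂.card = U₁.card ∧ (∀ u ∈ U₂, M'.R v' u) ∧
          ∀ u₂ ∈ U₂, ∃ u₁ ∈ U₁, GBisim c ℓ M u₁ M' u₂) ∧
      (∀ U₁ : Finset M'.W, U₁.Nonempty → U₁.card ≤ c → (∀ u ∈ U₁, M'.R v' u) →
        ∃ U₂ : Finset M.W, U₂.card = U₁.card ∧ (∀ u ∈ U₂, M.R v u) ∧
          ∀ u₂ ∈ U₂, ∃ u₁ ∈ U₁, GBisim c ℓ M u₂ M' u₁)

/-- `GBisimG c ℓ M v M' v'` holds iff Duplicator has a winning strategy in the `ℓ`-round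
`c`-graded *global* bisimulation game starting from configuration `(M, v, M', v')`:
Spoiler may additionally play global rounds, selecting worlds anywhere in one model. -/
def GBisimG {d : ℕ} (c : ℕ) : (ℓ : ℕ) → (M : KModel d) → M.W → (M' : KModel d) → M'.W → Prop
  | 0, M, v, M', v' => ∀ p, M.val v p ↔ M'.val v' p
  | ℓ + 1, M, v, M', v' =>
      (∀ p, M.val v p ↔ M'.val v' p) ∧
      (∀ U₁ : Finset M.W, U₁.Nonempty → U₁.card ≤ c → (∀ u ∈ U₁, M.R v u) →
        ∃ U₂ : Finset M'.W, U₂.card = U₁.card ∧ (∀ u ∈ U₂, M'.R v' u) ∧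
          ∀ u₂ ∈ U₂, ∃ u₁ ∈ U₁, GBisimG c ℓ M u₁ M' u₂) ∧
      (∀ U₁ : Finset M'.W, U₁.Nonempty → U₁.card ≤ c → (∀ u ∈ U₁, M'.R v' u) →
        ∃ U₂ : Finset M.W, U₂.card = U₁.card ∧ (∀ u ∈ U₂, M.R v u) ∧
          ∀ u₂ ∈ U₂, ∃ u₁ ∈ U₁, GBisimG c ℓ M u₂ M' u₁) ∧
      (∀ U₁ : Finset M.W, U₁.Nonempty → U₁.card ≤ c →
        ∃ U₂ : Finset M'.W, U₂.card = U₁.card ∧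
          ∀ u₂ ∈ U₂, ∃ u₁ ∈ U₁, GBisimG c ℓ M u₁ M' u₂) ∧
      (∀ U₁ : Finset M'.W, U₁.Nonempty → U₁.card ≤ c →
        ∃ U₂ : Finset M.W, U₂.card = U₁.card ∧
          ∀ u₂ ∈ U₂, ∃ u₁ ∈ U₁, GBisimG c ℓ M u₂ M' u₁)

/-! ## Characteristic formulas -/

/-- The conjunction of all propositions true at `v` and of the negations of all
propositions false at `v`. -/
def atomDesc {d : ℕ} (hd : 0 < d) (M : KModel d) (v : M.W) : MForm d :=
  MForm.conjList hd ((List.finRange d).map fun p =>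
    if M.val v p then MForm.prop p else MForm.neg (MForm.prop p))

/-- `|U^n_{v,w}|`: the number of neighbours `u` of `v` with `(M,u) ∼_{n,c} (M,w)`. -/
def USet {d : ℕ} (c n : ℕ) (M : KModel d) (v w : M.W) : ℕ :=
  Nat.card {u : M.W // M.R v u ∧ GBisim c n M u M w}

/-- The characteristic formula `φ^{ℓ,c}_{[M,v]}` of a finite pointed Kripke model for GML. -/
def charF {d : ℕ} (hd : 0 < d) (c : ℕ) (M : KModel d) : ℕ → M.W → MForm d
  | 0, v => atomDesc hd M v
  | n + 1, v =>
      MForm.conjList hd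
        ([atomDesc hd M v] ++
         ((M.worldList.filter fun w => decide (M.R v w)).flatMap fun w =>
            ((List.range c).map (· + 1)).filterMap fun k =>
              if k ≤ min (USet c n M v w) c then some (MForm.dia k (charF hd c M n w))
              else none) ++
         ((M.worldList.filter fun w => decide (M.R v w)).flatMap fun w =>
            ((List.range c).map (· + 1)).filterMap fun k =>
              if USet c n M v w < k ∧ k ≤ c then
                some (MForm.neg (MForm.dia k (charF hd c M n w)))
              else none) ++
         [MForm.neg (MForm.dia 1 (MForm.conjList hd
            ((M.worldList.filter fun w => decide (M.R v w)).map fun w =>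
              MForm.neg (charF hd c M n w))))])

/-- `|U^n_{v,w}|` for the global game. -/
def USetG {d : ℕ} (c n : ℕ) (M : KModel d) (v w : M.W) : ℕ :=
  Nat.card {u : M.W // M.R v u ∧ GBisimG c n M u M w}

/-- `|J^n_w|`: the number of worlds `u` with `(M,u) ∼^∃_{n,c} (M,w)`. -/
def JSetG {d : ℕ} (c n : ℕ) (M : KModel d) (w : M.W) : ℕ :=
  Nat.card {u : M.W // GBisimG c n M u M w}

/-- The global characteristic formula `φ^{ℓ,c}_{∃[M,v]}` for GMLC. -/
def charG {d : ℕ} (hd : 0 < d) (c : ℕ) (M : KModel d) : ℕ → M.W → MForm d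
  | 0, v => atomDesc hd M v
  | n + 1, v =>
      MForm.conjList hd
        ([atomDesc hd M v] ++
         ((M.worldList.filter fun w => decide (M.R v w)).flatMap fun w =>
            ((List.range c).map (· + 1)).filterMap fun k =>
              if k ≤ min (USetG c n M v w) c then some (MForm.dia k (charG hd c M n w))
              else none) ++
         ((M.worldList.filter fun w => decide (M.R v w)).flatMap fun w =>
            ((List.range c).map (· + 1)).filterMap fun k =>
              if USetG c n M v w < k ∧ k ≤ c then
                some (MForm.neg (MForm.dia k (charG hd c M n w)))
              else none) ++
         (M.worldList.flatMap fun w =>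
            ((List.range c).map (· + 1)).filterMap fun k =>
              if k ≤ min (JSetG c n M w) c then some (MForm.glob k (charG hd c M n w))
              else none) ++
         (M.worldList.flatMap fun w =>
            ((List.range c).map (· + 1)).filterMap fun k =>
              if JSetG c n M w < k ∧ k ≤ c then
                some (MForm.neg (MForm.glob k (charG hd c M n w)))
              else none) ++
         [MForm.neg (MForm.dia 1 (MForm.conjList hd
            ((M.worldList.filter fun w => decide (M.R v w)).map fun w =>
              MForm.neg (charG hd c M n w)))),
          MForm.neg (MForm.glob 1 (MForm.conjList hd
            (M.worldList.map fun w => MForm.neg (charG hd c M n w))))])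

/-! ## Two-variable first-order logic with counting quantifiers (C²) -/

/-- C² formulas over unary predicates `p₁, …, p_d` and one binary relation `E`, with the two
variables represented by `Bool` (`false` is the distinguished free variable `x`). -/
inductive C2Form (d : ℕ) : Type
  | prop : Fin d → Bool → C2Form d
  | edge : Bool → Bool → C2Form d
  | eq : Bool → Bool → C2Form d
  | neg : C2Form d → C2Form d
  | and : C2Form d → C2Form d → C2Form d
  | exC : ℕ → Bool → C2Form d → C2Form d

namespace C2Form

/-- Quantifier depth. -/
def depth {d : ℕ} : C2Form d → ℕ
  | prop _ _ => 0
  | edge _ _ => 0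
  | eq _ _ => 0
  | neg φ => depth φ
  | and φ ψ => max (depth φ) (depth ψ)
  | exC _ _ φ => depth φ + 1

/-- Counting rank. -/
def rank {d : ℕ} : C2Form d → ℕ
  | prop _ _ => 0
  | edge _ _ => 0
  | eq _ _ => 0
  | neg φ => rank φ
  | and φ ψ => max (rank φ) (rank ψ)
  | exC k _ φ => max k (rank φ)

/-- Well-formed C² formulas: all counting indices are positive. -/
def IsC2 {d : ℕ} : C2Form d → Prop
  | prop _ _ => True
  | edge _ _ => True
  | eq _ _ => True
  | neg φ => IsC2 φ
  | and φ ψ => IsC2 φ ∧ IsC2 ψ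
  | exC k _ φ => 1 ≤ k ∧ IsC2 φ

/-- FO² formulas: all counting quantifiers are with `k = 1`, i.e. ordinary `∃`. -/
def IsFO2 {d : ℕ} : C2Form d → Prop
  | prop _ _ => True
  | edge _ _ => True
  | eq _ _ => True
  | neg φ => IsFO2 φ
  | and φ ψ => IsFO2 φ ∧ IsFO2 ψ
  | exC k _ φ => k = 1 ∧ IsFO2 φ

/-- The set of free variables of a formula. -/
def free {d : ℕ} : C2Form d → Set Bool
  | prop _ b => {b}
  | edge b₁ b₂ => {b₁, b₂}
  | eq b₁ b₂ => {b₁, b₂}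
  | neg φ => free φ
  | and φ ψ => free φ ∪ free ψ
  | exC _ b φ => free φ \ {b}

end C2Form

/-- A finite first-order structure over the signature with unary predicates `p₁, …, p_d`
and one binary relation `E`. -/
structure FOModel (d : ℕ) where
  W : Type
  fintype : Fintype W
  E : W → W → Prop
  val : W → Fin d → Prop

/-- First-order satisfaction of C² formulas under an assignment of the two variables. -/
def FOModel.sat {d : ℕ} (M : FOModel d) : (Bool → M.W) → C2Form d → Prop
  | a, C2Form.prop p b => M.val (a b) p
  | a, C2Form.edge b₁ b₂ => M.E (a b₁) (a b₂)
  | a, C2Form.eq b₁ b₂ => a b₁ = a b₂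
  | a, C2Form.neg φ => ¬ M.sat a φ
  | a, C2Form.and φ ψ => M.sat a φ ∧ M.sat a ψ
  | a, C2Form.exC k b φ => k ≤ Nat.card {w : M.W // M.sat (Function.update a b w) φ}

/-- The first-order structure associated with a node-labelled graph. -/
def LGraph.toFOModel {d : ℕ} (G : LGraph d) : FOModel d where
  W := Fin G.n
  fintype := inferInstance
  E := G.adj
  val := fun v p => G.label v p = true

/-! ## Two-pebble graded games -/

/-- The positions of the pebbles (pair 1 placed, pair 2 possibly unplaced) form a partial
isomorphism between `M` and `M'`. -/
def PIso {d : ℕ} (M M' : FOModel d) (p₁ : M.W × M'.W) (p₂ : Option (M.W × M'.W)) : Prop :=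
  ((∀ q, M.val p₁.1 q ↔ M'.val p₁.2 q) ∧ (M.E p₁.1 p₁.1 ↔ M'.E p₁.2 p₁.2)) ∧
  ∀ x ∈ p₂,
    (∀ q, M.val x.1 q ↔ M'.val x.2 q) ∧ (M.E x.1 x.1 ↔ M'.E x.2 x.2) ∧
    (p₁.1 = x.1 ↔ p₁.2 = x.2) ∧
    (M.E p₁.1 x.1 ↔ M'.E p₁.2 x.2) ∧ (M.E x.1 p₁.1 ↔ M'.E x.2 p₁.2)

/-- Update the configuration by moving pebble pair `i` (`false` = pair 1, `true` = pair 2)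
to the given pair of worlds. -/
def updCfg {α β : Type*} (p₁ : α × β) (p₂ : Option (α × β)) :
    Bool → α × β → (α × β) × Option (α × β)
  | false, x => (x, p₂)
  | true, x => (p₁, some x)

/-- `PebbleWin c M M' ℓ p₁ p₂` holds iff Duplicator has a winning strategy in the 2-pebble
`ℓ`-round `c`-graded game from the configuration with pebble pair 1 on `p₁` and pebble pair 2
on `p₂` (if placed): she can ensure that the pebble positions always form a partial
isomorphism. -/
def PebbleWin {d : ℕ} (c : ℕ) (M M' : FOModel d) :
    (ℓ : ℕ) → M.W × M'.W → Option (M.W × M'.W) → Prop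
  | 0, p₁, p₂ => PIso M M' p₁ p₂
  | ℓ + 1, p₁, p₂ =>
      PIso M M' p₁ p₂ ∧
      ∀ i : Bool,
        (∀ U : Finset M.W, U.Nonempty → U.card ≤ c →
          ∃ U' : Finset M'.W, U'.card = U.card ∧
            ∀ u' ∈ U', ∃ u ∈ U,
              PebbleWin c M M' ℓ (updCfg p₁ p₂ i (u, u')).1 (updCfg p₁ p₂ i (u, u')).2) ∧
        (∀ U : Finset M'.W, U.Nonempty → U.card ≤ c →
          ∃ U' : Finset M.W, U'.card = U.card ∧
            ∀ u ∈ U', ∃ u' ∈ U,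
              PebbleWin c M M' ℓ (updCfg p₁ p₂ i (u, u')).1 (updCfg p₁ p₂ i (u, u')).2)

end

/-! ### Encodings by reals -/

open Cardinal in
/-- Finite tuples of reals can be encoded by a single real. -/
lemma exists_enc_vec (n : ℕ) : ∃ f : (Fin n → ℝ) → ℝ, Function.Injective f := by
  have h : #(Fin n → ℝ) ≤ #ℝ := by
    simpa [Cardinal.mk_real] using Cardinal.power_nat_le (n := n) Cardinal.aleph0_le_continuum
  obtain ⟨f⟩ := h
  exact ⟨f, f.injective⟩

/-- Finite multisets of real vectors can be encoded by a single real. -/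
lemma exists_enc_multiset (n : ℕ) :
    ∃ f : Multiset (Fin n → ℝ) → ℝ, Function.Injective f := by
  obtain ⟨g, hg⟩ := exists_enc_vec n
  obtain ⟨f⟩ : Nonempty (Multiset ℝ ↪ ℝ) := by
    have h := Cardinal.mk_multiset_of_infinite ℝ
    exact h.le
  exact ⟨fun M => f (M.map g), f.injective.comp (Multiset.map_injective hg)⟩

/-- A chosen injective encoding of vectors. -/
noncomputable def encVec (n : ℕ) : (Fin n → ℝ) → ℝ := (exists_enc_vec n).choose

/-- A chosen injective encoding of multisets of vectors. -/
noncomputable def encMul (n : ℕ) : Multiset (Fin n → ℝ) → ℝ := (exists_enc_multiset n).choose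

lemma encVec_injective (n : ℕ) : Function.Injective (encVec n) := (exists_enc_vec n).choose_spec

lemma encMul_injective (n : ℕ) : Function.Injective (encMul n) :=
  (exists_enc_multiset n).choose_spec

/-! ### Capped multisets -/

lemma count_capAt {α : Type*} [DecidableEq α] (k : ℕ) (M : Multiset α) (a : α) :
    (M.capAt k).count a = min (M.count a) k := by
  have e : (Classical.decEq α) = ‹DecidableEq α› := Subsingleton.elim _ _
  unfold Multiset.capAt
  rw [e, Multiset.count_bind]
  simp only [Multiset.count_replicate]
  change (∑ b ∈ M.toFinset, if b = a then min (M.count b) k else 0) = _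
  rw [Finset.sum_ite_eq']
  split_ifs with h
  · rfl
  · rw [Multiset.mem_toFinset] at h
    simp [Multiset.count_eq_zero_of_notMem h]

lemma capAt_capAt {α : Type*} (k : ℕ) (M : Multiset α) :
    (M.capAt k).capAt k = M.capAt k := by
  ext a
  simp [count_capAt]

/-- Capping at `c` does not change whether a property has at least `k ≤ c` witnesses. -/
lemma le_card_filter_capAt {α : Type*} {c k : ℕ} (hk : k ≤ c) (M : Multiset α) (P : α → Prop)
    [DecidablePred P] :
    k ≤ (M.filter P).card ↔ k ≤ ((M.capAt c).filter P).card := by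
  constructor
  · intro h
    by_cases hex : ∃ a, P a ∧ c < M.count a
    · -- a single value of large multiplicity already provides `c` witnesses
      obtain ⟨a, ha, hc⟩ := hex
      refine le_trans ?_ (Multiset.count_le_card a _)
      rw [Multiset.count_filter_of_pos ha, count_capAt]
      omega
    · push Not at hex
      have e : (M.capAt c).filter P = M.filter P := by
        ext a
        rw [Multiset.count_filter, Multiset.count_filter, count_capAt]
        split_ifs with hp
        · exact min_eq_left (hex a hp)
        · rfl
      rwa [e]
  · intro h
    refine h.trans (Multiset.card_le_card (Multiset.filter_le_filter _ ?_))
    rw [Multiset.le_iff_count]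
    intro a
    rw [count_capAt]
    exact min_le_left _ _

/-- If two families of colours have the same capped multiset, and the truth of a property is
invariant under passing to an equally coloured member of the other family, then both families have
the same number of witnesses up to the cap. -/
lemma le_card_filter_iff_of_capAt_eq {α β γ : Type*} {c k : ℕ} (hc : 1 ≤ c) (hk : k ≤ c)
    {s : Finset α} {t : Finset β} {f : α → γ} {g : β → γ}
    (h : (s.val.map f).capAt c = (t.val.map g).capAt c) {P : α → Prop} {Q : β → Prop}
    (hPQ : ∀ u ∈ s, ∀ w ∈ t, f u = g w → (P u ↔ Q w)) :
    k ≤ (s.filter P).card ↔ k ≤ (t.filter Q).card := by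
  have mem : ∀ (M : Multiset γ) (x : γ), x ∈ M.capAt c ↔ x ∈ M := by
    intro M x
    rw [← Multiset.one_le_count_iff_mem, ← Multiset.one_le_count_iff_mem, count_capAt]
    omega
  have cross : ∀ x, (∃ u ∈ s, f u = x) ↔ ∃ w ∈ t, g w = x := by
    intro x
    have := mem (s.val.map f) x
    rw [h, mem] at this
    simpa using this.symm
  -- the colours of the witnesses in the first family determine the witnesses in both
  let S : γ → Prop := fun x => ∃ u ∈ s, P u ∧ f u = x
  have hP : ∀ u ∈ s, (P u ↔ S (f u)) := by
    intro u hu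
    refine ⟨fun hp => ⟨u, hu, hp, rfl⟩, ?_⟩
    rintro ⟨u₁, hu₁, hp, e⟩
    obtain ⟨w, hw, e'⟩ := (cross (f u)).1 ⟨u, hu, rfl⟩
    rw [hPQ u hu w hw e'.symm, ← hPQ u₁ hu₁ w hw (e.trans e'.symm)]
    exact hp
  have hQ : ∀ w ∈ t, (Q w ↔ S (g w)) := by
    intro w hw
    constructor
    · intro hq
      obtain ⟨u, hu, e⟩ := (cross (g w)).2 ⟨w, hw, rfl⟩
      exact ⟨u, hu, (hPQ u hu w hw e).2 hq, e⟩
    · rintro ⟨u, hu, hp, e⟩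
      exact (hPQ u hu w hw e).1 hp
  have e₁ : (s.filter P).card = ((s.val.map f).filter S).card := by
    rw [Multiset.filter_map, Multiset.card_map, Finset.filter_congr hP]
    rfl
  have e₂ : (t.filter Q).card = ((t.val.map g).filter S).card := by
    rw [Multiset.filter_map, Multiset.card_map, Finset.filter_congr hQ]
    rfl
  rw [e₁, e₂, le_card_filter_capAt hk, le_card_filter_capAt hk (t.val.map g), h]

/-! ### The colour refinement network -/

/-- The layer sending a node to a code of its own label and of the multisets of labels of its
neighbours and non-neighbours, capped at `c`. All output coordinates carry the same code. -/
noncomputable def refineLayer (c din dout : ℕ) : GNNLayer din dout where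
  m₁ := 1
  m₂ := 1
  agg := fun M _ => encMul din (M.capAt c)
  aux := fun M _ => encMul din (M.capAt c)
  comb := fun x y z _ => encVec 3 ![encVec din x, y 0, z 0]

/-- Colour refinement for `L` rounds with multiplicities capped at `c`. The dimensions `d + ℓ` make
every layer after the input nonempty. -/
noncomputable def refineNet (d c L : ℕ) (cls : (Fin (d + L) → ℝ) → Bool) : GNN d where
  kind := GNNKind.ACP
  L := L
  dims := fun ℓ => d + ℓ
  dims_zero := rfl
  layer := fun ℓ _ => refineLayer c (d + ℓ) (d + (ℓ + 1))
  cls := cls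

section
variable {d c L : ℕ} {cls : (Fin (d + L) → ℝ) → Bool}

lemma refineNet_labelAt_succ {G G' : LGraph d} {ℓ : ℕ} (hℓ : ℓ < L) {v : Fin G.n} {v' : Fin G'.n}
    (h : (refineNet d c L cls).labelAt G (ℓ + 1) v = (refineNet d c L cls).labelAt G' (ℓ + 1) v') :
    (refineNet d c L cls).labelAt G ℓ v = (refineNet d c L cls).labelAt G' ℓ v' ∧
    ((G.nbrs v).val.map fun w => (refineNet d c L cls).labelAt G ℓ w).capAt c =
      ((G'.nbrs v').val.map fun w => (refineNet d c L cls).labelAt G' ℓ w).capAt c ∧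
    ((G.conbrs v).val.map fun w => (refineNet d c L cls).labelAt G ℓ w).capAt c =
      ((G'.conbrs v').val.map fun w => (refineNet d c L cls).labelAt G' ℓ w).capAt c := by
  have hL : ℓ < (refineNet d c L cls).L := hℓ
  rw [GNN.labelAt, GNN.labelAt] at h
  simp only [hL, dif_pos] at h
  have h0 := congrFun h (⟨0, Nat.succ_pos _⟩ : Fin (d + ℓ + 1))
  have h1 := encVec_injective 3 h0
  have a0 := encVec_injective _ (congrFun h1 0)
  have a1 := encMul_injective _ (congrFun h1 1)
  have a2 := encMul_injective _ (congrFun h1 2)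
  exact ⟨a0, a1, a2⟩

lemma refineNet_label_eq {G G' : LGraph d} {ℓ : ℕ} (hℓ : ℓ ≤ L) {v : Fin G.n} {v' : Fin G'.n}
    (h : (refineNet d c L cls).labelAt G ℓ v = (refineNet d c L cls).labelAt G' ℓ v') (p : Fin d) :
    G.label v p = true ↔ G'.label v' p = true := by
  induction ℓ with
  | zero =>
    have h0 := congrFun h p
    simp only [GNN.labelAt] at h0
    change (if G.label v p = true then (1 : ℝ) else 0)
      = (if G'.label v' p = true then (1 : ℝ) else 0) at h0
    split_ifs at h0 <;> simp_all
  | succ ℓ ih => exact ih (by omega) (refineNet_labelAt_succ (by omega) h).1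

end

/-- Every node is `o` itself, a neighbour of `o`, or a non-neighbour of `o`. -/
lemma card_split {d : ℕ} (G : LGraph d) (o : Fin G.n) (Q : Fin G.n → Prop) :
    Nat.card {w // Q w} = (if Q o then 1 else 0) + ((G.nbrs o).filter Q).card +
      ((G.conbrs o).filter Q).card := by
  have hu : (Finset.univ : Finset (Fin G.n)) = ({o} ∪ G.nbrs o) ∪ G.conbrs o := by
    ext w
    simp only [LGraph.nbrs, LGraph.conbrs, Finset.mem_univ, Finset.mem_union,
      Finset.mem_singleton, Finset.mem_filter, true_and, true_iff]
    tauto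
  rw [Nat.card_eq_fintype_card, Fintype.card_subtype, hu, Finset.filter_union, Finset.filter_union,
    Finset.card_union_of_disjoint, Finset.card_union_of_disjoint, Finset.filter_singleton]
  · split_ifs <;> simp
  · refine Finset.disjoint_filter_filter ?_
    simp [LGraph.nbrs, G.irrefl]
  · rw [← Finset.filter_union]
    refine Finset.disjoint_filter_filter ?_
    rw [Finset.disjoint_left]
    intro w
    simp only [LGraph.nbrs, LGraph.conbrs, Finset.mem_union,
      Finset.mem_singleton, Finset.mem_filter, Finset.mem_univ, true_and]
    tauto

/-- Equal labels at level `ℓ`, together with the same equality and adjacency pattern of the two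
variables, imply agreement on formulas of depth at most `ℓ` and rank below the cap. -/
lemma sat_iff_of_labelAt_eq {d c L : ℕ} {cls : (Fin (d + L) → ℝ) → Bool} {G G' : LGraph d}
    (φ : C2Form d) (hr : φ.rank < c) : ∀ (ℓ : ℕ), ℓ ≤ L → φ.depth ≤ ℓ →
    ∀ (a : Bool → Fin G.n) (a' : Bool → Fin G'.n),
    (∀ b, (refineNet d c L cls).labelAt G ℓ (a b) = (refineNet d c L cls).labelAt G' ℓ (a' b)) →
    (∀ b₁ b₂, (a b₁ = a b₂ ↔ a' b₁ = a' b₂) ∧ (G.adj (a b₁) (a b₂) ↔ G'.adj (a' b₁) (a' b₂))) →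
    (G.toFOModel.sat a φ ↔ G'.toFOModel.sat a' φ) := by
  induction φ with
  | prop p b =>
    intro ℓ hℓ _ a a' hcol _
    exact refineNet_label_eq hℓ (hcol b) p
  | edge b₁ b₂ =>
    intro ℓ _ _ a a' _ hiso
    exact (hiso b₁ b₂).2
  | eq b₁ b₂ =>
    intro ℓ _ _ a a' _ hiso
    exact (hiso b₁ b₂).1
  | neg φ ih =>
    intro ℓ hℓ hd a a' hcol hiso
    exact not_congr (ih hr ℓ hℓ hd a a' hcol hiso)
  | and φ ψ ih₁ ih₂ =>
    intro ℓ hℓ hd a a' hcol hiso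
    simp only [C2Form.rank, C2Form.depth] at hr hd
    exact and_congr (ih₁ (by omega) ℓ hℓ (by omega) a a' hcol hiso)
      (ih₂ (by omega) ℓ hℓ (by omega) a a' hcol hiso)
  | exC k b φ ih =>
    intro ℓ hℓ hd a a' hcol hiso
    simp only [C2Form.rank, C2Form.depth] at hr hd
    obtain ⟨m, rfl⟩ : ∃ m, ℓ = m + 1 := ⟨ℓ - 1, by omega⟩
    obtain ⟨h0, h1, h2⟩ := refineNet_labelAt_succ (by omega) (hcol (!b))
    have key : ∀ (w : Fin G.n) (w' : Fin G'.n),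
        (refineNet d c L cls).labelAt G m w = (refineNet d c L cls).labelAt G' m w' →
        (w = a (!b) ↔ w' = a' (!b)) → (G.adj (a (!b)) w ↔ G'.adj (a' (!b)) w') →
        (G.toFOModel.sat (Function.update a b w) φ ↔
          G'.toFOModel.sat (Function.update a' b w') φ) := by
      intro w w' hw he hadj
      have hadj' : G.adj w (a (!b)) ↔ G'.adj w' (a' (!b)) :=
        ⟨fun h => G'.symm _ _ (hadj.1 (G.symm _ _ h)), fun h => G.symm _ _ (hadj.2 (G'.symm _ _ h))⟩
      have he' : a (!b) = w ↔ a' (!b) = w' := by rw [eq_comm, he, eq_comm]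
      refine ih (by omega) m (by omega) (by omega) (Function.update (β := fun _ => Fin G.n) a b w)
        (Function.update (β := fun _ => Fin G'.n) a' b w') ?_ ?_
      · intro b₁
        rcases Bool.eq_or_eq_not b₁ b with rfl | rfl
        · simpa using hw
        · simpa using h0
      · intro b₁ b₂
        rcases Bool.eq_or_eq_not b₁ b with e₁ | e₁ <;>
          rcases Bool.eq_or_eq_not b₂ b with e₂ | e₂ <;> subst e₁ <;> subst e₂
        · simp [G.irrefl, G'.irrefl]
        · simpa using ⟨he, hadj'⟩
        · simpa using ⟨he', hadj⟩
        · simp [G.irrefl, G'.irrefl]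
    change k ≤ Nat.card {w : Fin G.n // G.toFOModel.sat (Function.update a b w) φ} ↔
      k ≤ Nat.card {w : Fin G'.n // G'.toFOModel.sat (Function.update a' b w) φ}
    rw [card_split G (a (!b)), card_split G' (a' (!b))]
    have ko := key (a (!b)) (a' (!b)) h0 (by simp) (by simp [G.irrefl, G'.irrefl])
    have kn : ∀ j ≤ k, _ := fun j hj => le_card_filter_iff_of_capAt_eq (c := c) (k := j)
      (by omega) (by omega) h1 (P := fun w => G.toFOModel.sat (Function.update a b w) φ)
      (Q := fun w => G'.toFOModel.sat (Function.update a' b w) φ) (by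
        intro u hu w hw e
        simp only [LGraph.nbrs, Finset.mem_filter, Finset.mem_univ, true_and] at hu hw
        refine key u w e ?_ (by tauto)
        constructor
        · rintro rfl; exact absurd hu (G.irrefl _)
        · rintro rfl; exact absurd hw (G'.irrefl _))
    have kc : ∀ j ≤ k, _ := fun j hj => le_card_filter_iff_of_capAt_eq (c := c) (k := j)
      (by omega) (by omega) h2 (P := fun w => G.toFOModel.sat (Function.update a b w) φ)
      (Q := fun w => G'.toFOModel.sat (Function.update a' b w) φ) (by
        intro u hu w hw e
        simp only [LGraph.conbrs, Finset.mem_filter, Finset.mem_univ, true_and] at hu hw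
        exact key u w e (by tauto) (by tauto))
    simp only [ko]
    -- two numbers passing the same thresholds up to `k` have the same truncation at `k`
    have trunc : ∀ x y : ℕ, (∀ j ≤ k, (j ≤ x ↔ j ≤ y)) → min k x = min k y := by
      intro x y h
      have hx := h (min k x) (by omega)
      have hy := h (min k y) (by omega)
      omega
    have tn := trunc _ _ kn
    have tc := trunc _ _ kc
    omega

/-- `C² ≤ GNN_b^AC+`: for every C² classifier `φ(x)` of dimension `d` (a C²
formula whose only free variable is `x`, represented by `false`) there exists a GNN classifier
`N_φ` in `GNN_b^AC+` of dimension `d` such that for every pointed graph `(G,v)` of dimension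
`d`, `N_φ(G,v) = true` iff `M_G ⊨ φ(v)`. -/
theorem c2_le_gnn_b_acplus :
    ∀ (d : ℕ) (φ : C2Form d), φ.IsC2 → φ.free ⊆ {false} →
      ∃ N : GNN d, N.kind = GNNKind.ACP ∧
        (∀ (ℓ : ℕ) (h : ℓ < N.L),
          BoundedAgg (N.layer ℓ h).agg ∧ BoundedAgg (N.layer ℓ h).aux) ∧
        ∀ (G : LGraph d) (v : Fin G.n),
          N.eval G v = true ↔ (LGraph.toFOModel G).sat (fun _ => v) φ := by
  intro d φ _ _
  -- labels do not depend on the classification function, so an arbitrary one serves to define it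
  let N₀ := refineNet d (φ.rank + 1) φ.depth (fun _ => true)
  let cls : (Fin (d + φ.depth) → ℝ) → Bool := fun x =>
    decide (∃ (G : LGraph d) (v : Fin G.n),
      N₀.labelAt G φ.depth v = x ∧ G.toFOModel.sat (fun _ => v) φ)
  have indep : ∀ (G : LGraph d) (ℓ : ℕ) (v : Fin G.n),
      (refineNet d (φ.rank + 1) φ.depth cls).labelAt G ℓ v = N₀.labelAt G ℓ v := by
    intro G ℓ
    induction ℓ with
    | zero => intro v; rfl
    | succ ℓ ih =>
      intro v
      have ih' := funext ih
      rw [GNN.labelAt, GNN.labelAt, ih']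
      rfl
  refine ⟨refineNet d (φ.rank + 1) φ.depth cls, rfl, ?_, ?_⟩
  · intro ℓ h
    have hb : ∀ M : Multiset (Fin (d + ℓ) → ℝ),
        (fun _ : Fin 1 => encMul (d + ℓ) (M.capAt (φ.rank + 1))) =
          fun _ => encMul (d + ℓ) ((M.capAt (φ.rank + 1)).capAt (φ.rank + 1)) := by
      intro M
      rw [capAt_capAt]
    exact ⟨⟨φ.rank + 1, hb⟩, ⟨φ.rank + 1, hb⟩⟩
  · intro G v
    change cls ((refineNet d (φ.rank + 1) φ.depth cls).labelAt G φ.depth v) = true ↔ _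
    rw [indep]
    simp only [cls, decide_eq_true_eq]
    constructor
    · rintro ⟨G', v', e, hs⟩
      exact (sat_iff_of_labelAt_eq φ (Nat.lt_succ_self _) φ.depth le_rfl le_rfl _ _ (fun _ => e)
        (by simp [G.irrefl, G'.irrefl])).1 hs
    · intro hs
      exact ⟨G, v, rfl, hs⟩
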